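/- Let 1 < p < ∞ with conjugate exponent p′ = p/(p−1). For every n ∈ ℕ and every f : C_n → ℝ, one has −E(Δf · |f|^{p−1} sgn(f)) ≥ 2·min(1/p, 1/p′) · E|∇(|f|^{p/2} sgn(f))|². -/

import Mathlib

open Finset MeasureTheory Real

noncomputable section

/-- Expectation on the Hamming cube `{-1,1}^n`, modeled as `Fin n → Bool`
(`true ↔ 1`, `false ↔ -1`), with the uniform probability measure. -/
def cubeE {n : ℕ} (f : (Fin n → Bool) → ℝ) : ℝ :=
  (∑ x : Fin n → Bool, f x) / 2 ^ n

/-- The Walsh monomial `x^S = ∏_{i ∈ S} x_i`. -/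
def walsh {n : ℕ} (S : Finset (Fin n)) (x : Fin n → Bool) : ℝ :=
  ∏ i ∈ S, (if x i then (1 : ℝ) else -1)

/-- Fourier coefficient `f̂(S) = E (f · x^S)`. -/
def cubeFourier {n : ℕ} (f : (Fin n → Bool) → ℝ) (S : Finset (Fin n)) : ℝ :=
  cubeE fun x => f x * walsh S x

/-- The heat semigroup `e^{tΔ} f = Σ_S e^{-t|S|} f̂(S) x^S`. -/
def heat1 {n : ℕ} (t : ℝ) (f : (Fin n → Bool) → ℝ) : (Fin n → Bool) → ℝ :=
  fun x => ∑ S : Finset (Fin n), Real.exp (-t * (S.card : ℝ)) * cubeFourier f S * walsh S x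

/-- The fractional heat semigroup `e^{tΔ_γ} f = Σ_S e^{-t|S|^γ} f̂(S) x^S`. -/
def heatFrac {n : ℕ} (γ t : ℝ) (f : (Fin n → Bool) → ℝ) : (Fin n → Bool) → ℝ :=
  fun x => ∑ S : Finset (Fin n), Real.exp (-t * (S.card : ℝ) ^ γ) * cubeFourier f S * walsh S x

/-- The Laplacian `Δf = -Σ_S |S| f̂(S) x^S`. -/
def lap {n : ℕ} (f : (Fin n → Bool) → ℝ) : (Fin n → Bool) → ℝ :=
  fun x => -∑ S : Finset (Fin n), (S.card : ℝ) * cubeFourier f S * walsh S x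

/-- The fractional Laplacian `Δ_γ f = -Σ_S |S|^γ f̂(S) x^S`. -/
def fracLap {n : ℕ} (γ : ℝ) (f : (Fin n → Bool) → ℝ) : (Fin n → Bool) → ℝ :=
  fun x => -∑ S : Finset (Fin n), (S.card : ℝ) ^ γ * cubeFourier f S * walsh S x

/-- The discrete partial derivative `∇_j f`. -/
def cubeGrad {n : ℕ} (j : Fin n) (f : (Fin n → Bool) → ℝ) (x : Fin n → Bool) : ℝ :=
  (f (Function.update x j true) - f (Function.update x j false)) / 2

/-- The squared length of the discrete gradient, `|∇f|²(x) = Σ_j |∇_j f(x)|²`. -/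
def gradSq {n : ℕ} (f : (Fin n → Bool) → ℝ) (x : Fin n → Bool) : ℝ :=
  ∑ j : Fin n, (cubeGrad j f x) ^ 2

/-- The `L^p` norm `‖f‖_p = (E|f|^p)^{1/p}` on the Hamming cube. -/
def pNorm {n : ℕ} (p : ℝ) (f : (Fin n → Bool) → ℝ) : ℝ :=
  (cubeE fun x => |f x| ^ p) ^ (1 / p)

/-! A sharper constant, `4 / (p p')`, comes from a two-point Cauchy-Schwarz inequality. Write
`φ_s a = |a| ^ s sgn a`, so that `φ_s a - φ_s b` is `s` times the integral of `|x| ^ (s - 1)` over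
`[b, a]`. Since `|x| ^ (r - 1)` is the geometric mean of `|x| ^ (s - 1)` and `|x| ^ (t - 1)` when
`s + t = 2 r`, one gets `s t (φ_r a - φ_r b) ^ 2 ≤ r ^ 2 (φ_s a - φ_s b) (φ_t a - φ_t b)`. Taking
`s = 1`, `t = p - 1`, `r = p / 2` on every edge of the cube and integrating by parts gives
`-E(Δf · φ_{p-1} f) ≥ (4 / (p p')) E|∇ φ_{p/2} f|²`, and one of `1/p`, `1/p'` is at least `1/2`. -/

section SignedPower

/-- The signed power `|x| ^ s sgn x`, the odd extension of `x ↦ x ^ s` from the positive half-line;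
its value at `x = 0` is `0` for every exponent. It turns the nonlinear functions of `f` in the
inequality into odd monotone functions of one real variable. -/
def signedRpow (s x : ℝ) : ℝ :=
  |x| ^ s * Real.sign x

lemma signedRpow_neg (s x : ℝ) : signedRpow s (-x) = -signedRpow s x := by
  rw [signedRpow, signedRpow, abs_neg, Real.sign_neg, mul_neg]

lemma signedRpow_of_nonneg {s x : ℝ} (hs : s ≠ 0) (hx : 0 ≤ x) : signedRpow s x = x ^ s := by
  rcases hx.eq_or_lt with rfl | hx
  · simp [signedRpow, Real.zero_rpow hs]
  · rw [signedRpow, Real.sign_of_pos hx, abs_of_pos hx, mul_one]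

lemma signedRpow_one (x : ℝ) : signedRpow 1 x = x := by
  rcases le_total 0 x with hx | hx
  · rw [signedRpow_of_nonneg one_ne_zero hx, Real.rpow_one]
  · rw [← neg_neg x, signedRpow_neg, signedRpow_of_nonneg one_ne_zero (neg_nonneg.2 hx),
      Real.rpow_one]

variable {r s t : ℝ}

lemma rpow_quadratic_eq_sq {x : ℝ} (hx : 0 < x) (hr : s + t = 2 * r) (c : ℝ) :
    x ^ (s - 1) * (c * c) - 2 * x ^ (r - 1) * c + x ^ (t - 1) =
      (c * x ^ ((s - 1) / 2) - x ^ ((t - 1) / 2)) ^ 2 := by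
  have rpow_s : x ^ (s - 1) = x ^ ((s - 1) / 2) * x ^ ((s - 1) / 2) := by
    rw [← Real.rpow_add hx, add_halves]
  have rpow_t : x ^ (t - 1) = x ^ ((t - 1) / 2) * x ^ ((t - 1) / 2) := by
    rw [← Real.rpow_add hx, add_halves]
  have rpow_r : x ^ (r - 1) = x ^ ((s - 1) / 2) * x ^ ((t - 1) / 2) := by
    rw [← Real.rpow_add hx]
    congr 1
    linarith
  rw [rpow_s, rpow_t, rpow_r]
  ring

lemma hasDerivAt_rpow_div {x : ℝ} (hs : s ≠ 0) (hx : x ≠ 0) :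
    HasDerivAt (fun y : ℝ ↦ y ^ s / s) (x ^ (s - 1)) x := by
  simpa [hs] using (Real.hasDerivAt_rpow_const (p := s) (.inl hx)).div_const s

lemma monotoneOn_rpow_quadratic (hs : 0 < s) (ht : 0 < t) (hr : s + t = 2 * r) (c : ℝ) :
    MonotoneOn (fun x : ℝ ↦ x ^ s / s * (c * c) - 2 * (x ^ r / r) * c + x ^ t / t)
      (Set.Ici 0) := by
  have r_pos : 0 < r := by linarith
  have continuous_rpow_div {q : ℝ} (hq : 0 < q) : Continuous fun y : ℝ ↦ y ^ q / q :=
    (Real.continuous_rpow_const hq.le).div_const q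
  refine monotoneOn_of_hasDerivWithinAt_nonneg (convex_Ici 0)
    (f' := fun x ↦ x ^ (s - 1) * (c * c) - 2 * x ^ (r - 1) * c + x ^ (t - 1))
    ?continuous (fun x hx ↦ ?derivative) fun x hx ↦ ?nonneg
  case continuous =>
    exact ((((continuous_rpow_div hs).mul_const _).sub
      (((continuous_rpow_div r_pos).const_mul 2).mul_const c)).add
        (continuous_rpow_div ht)).continuousOn
  all_goals rw [interior_Ici, Set.mem_Ioi] at hx
  case derivative =>
    exact ((((hasDerivAt_rpow_div hs.ne' hx.ne').mul_const _).sub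
      (((hasDerivAt_rpow_div r_pos.ne' hx.ne').const_mul 2).mul_const c)).add
        (hasDerivAt_rpow_div ht.ne' hx.ne')).hasDerivWithinAt
  case nonneg =>
    exact (sq_nonneg _).trans_eq (rpow_quadratic_eq_sq hx hr c).symm

lemma monotone_signedRpow_quadratic (hs : 0 < s) (ht : 0 < t) (hr : s + t = 2 * r) (c : ℝ) :
    Monotone fun x ↦
      signedRpow s x / s * (c * c) - 2 * (signedRpow r x / r) * c + signedRpow t x / t := by
  have r_pos : 0 < r := by linarith
  refine monotone_of_odd_of_monotoneOn_nonneg (fun x ↦ ?_) ?_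
  · simp only [signedRpow_neg]
    ring
  · refine (monotoneOn_rpow_quadratic hs ht hr c).congr fun x hx ↦ ?_
    simp only [signedRpow_of_nonneg hs.ne' hx, signedRpow_of_nonneg ht.ne' hx,
      signedRpow_of_nonneg r_pos.ne' hx]

-- Cauchy-Schwarz for the integrals of `|x| ^ (s - 1)` and `|x| ^ (t - 1)`, obtained without
-- integration: the increment of a monotone quadratic in `c` is nonnegative for every `c`.
lemma mul_sq_signedRpow_sub_le (hs : 0 < s) (ht : 0 < t) (hr : s + t = 2 * r) (a b : ℝ) :
    s * t / r ^ 2 * (signedRpow r a - signedRpow r b) ^ 2 ≤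
      (signedRpow s a - signedRpow s b) * (signedRpow t a - signedRpow t b) := by
  wlog hab : b ≤ a generalizing a b
  · linarith [this b a (le_of_not_ge hab)]
  have quadratic_nonneg (c : ℝ) :
      0 ≤ (signedRpow s a - signedRpow s b) / s * (c * c) +
        -2 * ((signedRpow r a - signedRpow r b) / r) * c +
          (signedRpow t a - signedRpow t b) / t := by
    linear_combination monotone_signedRpow_quadratic hs ht hr c hab
  have discrim_nonpos := discrim_le_zero quadratic_nonneg
  have cauchy_schwarz : ((signedRpow r a - signedRpow r b) / r) ^ 2 ≤
      (signedRpow s a - signedRpow s b) / s * ((signedRpow t a - signedRpow t b) / t) := by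
    rw [discrim] at discrim_nonpos
    linarith
  calc s * t / r ^ 2 * (signedRpow r a - signedRpow r b) ^ 2
      = s * t * ((signedRpow r a - signedRpow r b) / r) ^ 2 := by ring
    _ ≤ s * t *
          ((signedRpow s a - signedRpow s b) / s * ((signedRpow t a - signedRpow t b) / t)) := by
        gcongr
    _ = (signedRpow s a - signedRpow s b) * (signedRpow t a - signedRpow t b) := by
        field_simp

end SignedPower

section Cube

variable {n : ℕ}

lemma cubeE_mono {f g : (Fin n → Bool) → ℝ} (h : ∀ x, f x ≤ g x) : cubeE f ≤ cubeE g :=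
  div_le_div_of_nonneg_right (Finset.sum_le_sum fun x _ ↦ h x) (by positivity)

lemma cubeE_const_mul (c : ℝ) (f : (Fin n → Bool) → ℝ) :
    cubeE (fun x ↦ c * f x) = c * cubeE f := by
  rw [cubeE, cubeE, ← Finset.mul_sum, mul_div_assoc]

lemma cubeE_add (f g : (Fin n → Bool) → ℝ) :
    cubeE (fun x ↦ f x + g x) = cubeE f + cubeE g := by
  rw [cubeE, Finset.sum_add_distrib, add_div, cubeE, cubeE]

lemma cubeE_sum {ι : Type*} (I : Finset ι) (f : ι → (Fin n → Bool) → ℝ) :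
    cubeE (fun x ↦ ∑ i ∈ I, f i x) = ∑ i ∈ I, cubeE (f i) := by
  simp only [cubeE, ← Finset.sum_div]
  rw [Finset.sum_comm]

lemma cubeE_gradSq_nonneg (f : (Fin n → Bool) → ℝ) : 0 ≤ cubeE (gradSq f) :=
  div_nonneg (Finset.sum_nonneg fun _ _ ↦ Finset.sum_nonneg fun _ _ ↦ sq_nonneg _) (by positivity)

lemma sum_walsh_mul_walsh (x y : Fin n → Bool) :
    ∑ S : Finset (Fin n), walsh S y * walsh S x = if y = x then 2 ^ n else 0 := by
  have sum_eq_prod : ∑ S : Finset (Fin n), walsh S y * walsh S x =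
      ∏ i : Fin n, (1 + (if y i then (1 : ℝ) else -1) * (if x i then (1 : ℝ) else -1)) := by
    simp only [Finset.prod_one_add, Finset.powerset_univ, walsh, Finset.prod_mul_distrib]
  rw [sum_eq_prod]
  split_ifs with hyx
  · subst hyx
    have factor_eq_two (i : Fin n) :
        1 + (if y i then (1 : ℝ) else -1) * (if y i then (1 : ℝ) else -1) = 2 := by
      split_ifs <;> norm_num
    simp only [factor_eq_two, Finset.prod_const, Finset.card_univ, Fintype.card_fin]
  · obtain ⟨i, hi⟩ := Function.ne_iff.1 hyx
    refine Finset.prod_eq_zero (Finset.mem_univ i) ?_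
    cases hy : y i <;> cases hx : x i <;> simp_all

lemma sum_cubeFourier_mul_walsh (f : (Fin n → Bool) → ℝ) (x : Fin n → Bool) :
    ∑ S : Finset (Fin n), cubeFourier f S * walsh S x = f x := by
  calc ∑ S : Finset (Fin n), cubeFourier f S * walsh S x
      = ∑ S : Finset (Fin n), cubeE fun y ↦ f y * (walsh S y * walsh S x) := by
        simp only [cubeFourier, mul_comm _ (walsh _ x), ← cubeE_const_mul, mul_left_comm]
    _ = cubeE fun y ↦ f y * ∑ S : Finset (Fin n), walsh S y * walsh S x := by
        simp only [Finset.mul_sum, cubeE_sum]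
    _ = f x := by simp [sum_walsh_mul_walsh, cubeE]

/-- The neighbour of `x` in the Hamming cube across the edge in direction `j`, i.e. the point
obtained from `x` by changing the sign of its `j`-th coordinate. It expresses the Laplacian and the
discrete gradient as differences along edges. -/
def cubeFlip (j : Fin n) (x : Fin n → Bool) : Fin n → Bool :=
  Function.update x j (!x j)

lemma cubeFlip_involutive (j : Fin n) : Function.Involutive (cubeFlip j) := by
  intro x
  simp [cubeFlip]

lemma cubeE_comp_cubeFlip (j : Fin n) (f : (Fin n → Bool) → ℝ) :
    cubeE (fun x ↦ f (cubeFlip j x)) = cubeE f :=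
  congrArg (· / 2 ^ n) (Equiv.sum_comp (cubeFlip_involutive j).toPerm f)

lemma walsh_cubeFlip (S : Finset (Fin n)) (j : Fin n) (x : Fin n → Bool) :
    walsh S (cubeFlip j x) = if j ∈ S then -walsh S x else walsh S x := by
  have prod_eq_of_notMem {T : Finset (Fin n)} (hT : j ∉ T) : walsh T (cubeFlip j x) = walsh T x :=
    Finset.prod_congr rfl fun i hi ↦ by
      rw [cubeFlip, Function.update_of_ne (ne_of_mem_of_not_mem hi hT)]
  split_ifs with hj
  · have walsh_eq_mul_erase (y : Fin n → Bool) :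
        walsh S y = (if y j then (1 : ℝ) else -1) * walsh (S.erase j) y :=
      (Finset.mul_prod_erase S _ hj).symm
    rw [walsh_eq_mul_erase, walsh_eq_mul_erase x, prod_eq_of_notMem (Finset.notMem_erase j S)]
    cases hx : x j <;> simp [cubeFlip, hx]
  · exact prod_eq_of_notMem hj

lemma sub_cubeFlip_div_two (f : (Fin n → Bool) → ℝ) (j : Fin n) (x : Fin n → Bool) :
    (f x - f (cubeFlip j x)) / 2 =
      ∑ S : Finset (Fin n), if j ∈ S then cubeFourier f S * walsh S x else 0 := by
  rw [← sum_cubeFourier_mul_walsh f x, ← sum_cubeFourier_mul_walsh f (cubeFlip j x),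
    ← Finset.sum_sub_distrib, Finset.sum_div]
  refine Finset.sum_congr rfl fun S _ ↦ ?_
  rw [walsh_cubeFlip]
  split_ifs <;> ring

lemma neg_lap_eq_sum_sub_cubeFlip (f : (Fin n → Bool) → ℝ) (x : Fin n → Bool) :
    -lap f x = ∑ j : Fin n, (f x - f (cubeFlip j x)) / 2 := by
  simp only [lap, neg_neg, sub_cubeFlip_div_two]
  rw [Finset.sum_comm]
  refine Finset.sum_congr rfl fun S _ ↦ ?_
  rw [Finset.sum_ite_mem, Finset.univ_inter, Finset.sum_const, nsmul_eq_mul, mul_assoc]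

lemma cubeGrad_mul_cubeGrad (f g : (Fin n → Bool) → ℝ) (j : Fin n) (x : Fin n → Bool) :
    cubeGrad j f x * cubeGrad j g x =
      (f x - f (cubeFlip j x)) / 2 * ((g x - g (cubeFlip j x)) / 2) := by
  have update_self := Function.update_eq_self j x
  cases hx : x j <;> rw [hx] at update_self <;>
    simp only [cubeGrad, cubeFlip, hx, Bool.not_true, Bool.not_false, update_self]
  ring

lemma cubeE_sub_cubeFlip_mul (f g : (Fin n → Bool) → ℝ) (j : Fin n) :
    cubeE (fun x ↦ (f x - f (cubeFlip j x)) / 2 * g x) =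
      cubeE fun x ↦ cubeGrad j f x * cubeGrad j g x := by
  have flip_eq : cubeE (fun x ↦ (f (cubeFlip j x) - f x) / 2 * g (cubeFlip j x)) =
      cubeE fun x ↦ (f x - f (cubeFlip j x)) / 2 * g x := by
    simpa only [cubeFlip_involutive j _] using
      cubeE_comp_cubeFlip j fun x ↦ (f x - f (cubeFlip j x)) / 2 * g x
  calc cubeE (fun x ↦ (f x - f (cubeFlip j x)) / 2 * g x)
      = 1 / 2 * (cubeE (fun x ↦ (f x - f (cubeFlip j x)) / 2 * g x) +
          cubeE fun x ↦ (f (cubeFlip j x) - f x) / 2 * g (cubeFlip j x)) := by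
        rw [flip_eq]
        ring
    _ = cubeE fun x ↦ cubeGrad j f x * cubeGrad j g x := by
        rw [← cubeE_add, ← cubeE_const_mul]
        congr 1
        ext x
        rw [cubeGrad_mul_cubeGrad]
        ring

lemma neg_cubeE_lap_mul (f g : (Fin n → Bool) → ℝ) :
    -cubeE (fun x ↦ lap f x * g x) =
      cubeE fun x ↦ ∑ j : Fin n, cubeGrad j f x * cubeGrad j g x := by
  calc -cubeE (fun x ↦ lap f x * g x)
      = cubeE fun x ↦ -lap f x * g x := by
        rw [← neg_one_mul, ← cubeE_const_mul]
        simp only [neg_mul, one_mul]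
    _ = ∑ j : Fin n, cubeE fun x ↦ (f x - f (cubeFlip j x)) / 2 * g x := by
        simp only [neg_lap_eq_sum_sub_cubeFlip, Finset.sum_mul, cubeE_sum]
    _ = cubeE fun x ↦ ∑ j : Fin n, cubeGrad j f x * cubeGrad j g x := by
        simp only [cubeE_sub_cubeFlip_mul, cubeE_sum]

lemma mul_gradSq_signedRpow_le {r s t : ℝ} (hs : 0 < s) (ht : 0 < t) (hr : s + t = 2 * r)
    (f : (Fin n → Bool) → ℝ) (x : Fin n → Bool) :
    s * t / r ^ 2 * gradSq (fun y ↦ signedRpow r (f y)) x ≤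
      ∑ j : Fin n, cubeGrad j (fun y ↦ signedRpow s (f y)) x *
        cubeGrad j (fun y ↦ signedRpow t (f y)) x := by
  rw [gradSq, Finset.mul_sum]
  refine Finset.sum_le_sum fun j _ ↦ ?_
  have two_point := mul_sq_signedRpow_sub_le hs ht hr
    (f (Function.update x j true)) (f (Function.update x j false))
  simp only [cubeGrad]
  linear_combination two_point / 4

end Cube

lemma two_mul_min_le_four_mul_mul {a b : ℝ} (ha : 0 ≤ a) (hb : 0 ≤ b) (hab : a + b = 1) :
    2 * min a b ≤ 4 * (a * b) := by
  have one_le_two_mul_max : 1 ≤ 2 * max a b := by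
    linarith [le_max_left a b, le_max_right a b]
  calc 2 * min a b ≤ 2 * min a b * (2 * max a b) :=
        le_mul_of_one_le_right (mul_nonneg zero_le_two (le_min ha hb)) one_le_two_mul_max
    _ = 4 * (a * b) := by
        rw [← min_mul_max a b]
        ring

theorem stmt3_general (p : ℝ) (hp : 1 < p) (n : ℕ) (f : (Fin n → Bool) → ℝ) :
    -cubeE (fun x => lap f x * (|f x| ^ (p - 1) * Real.sign (f x))) ≥
      4 * (1 / p * (1 / (p / (p - 1)))) *
        cubeE (gradSq fun x => |f x| ^ (p / 2) * Real.sign (f x)) := by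
  have constant_eq : 4 * (1 / p * (1 / (p / (p - 1)))) = 1 * (p - 1) / (p / 2) ^ 2 := by
    field_simp
    ring
  rw [constant_eq, neg_cubeE_lap_mul, ← cubeE_const_mul, ge_iff_le]
  refine cubeE_mono fun x ↦ ?_
  have gradient_le :=
    mul_gradSq_signedRpow_le one_pos (sub_pos.2 hp) (r := p / 2) (by ring) f x
  simp only [signedRpow_one] at gradient_le
  exact gradient_le

/-- For `1 < p < ∞` with conjugate exponent `p' = p/(p-1)`, every `n` and every
`f : C_n → ℝ`:
`-E(Δf · |f|^{p-1} sgn f) ≥ 2 min(1/p, 1/p') · E|∇(|f|^{p/2} sgn f)|²`. -/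
theorem stmt3 (p : ℝ) (hp : 1 < p) (n : ℕ) (f : (Fin n → Bool) → ℝ) :
    -cubeE (fun x => lap f x * (|f x| ^ (p - 1) * Real.sign (f x))) ≥
      2 * min (1 / p) (1 / (p / (p - 1))) *
        cubeE (gradSq fun x => |f x| ^ (p / 2) * Real.sign (f x)) := by
  have inv_add_inv : 1 / p + 1 / (p / (p - 1)) = 1 := by
    field_simp
    ring
  have constant_le := two_mul_min_le_four_mul_mul (by bound) (by bound) inv_add_inv
  exact (mul_le_mul_of_nonneg_right constant_le (cubeE_gradSq_nonneg _)).trans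
    (stmt3_general p hp n f)
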